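/- Let μ be a critical offspring distribution with bounded support and nonzero variance σ², with span d = gcd{k ≥ 1: μ_k > 0}. Then as n → ∞ along integers with P(|T| = n) > 0, P(|T| = n) ∼ d n^{-3/2} / (σ√(2π)), where T is a μ-Galton–Watson tree. -/

import Mathlib

open scoped BigOperators

inductive PlaneTree : Type
  | node : List PlaneTree → PlaneTree

namespace PlaneTree

mutual
def size : PlaneTree → ℕ
  | .node ts => 1 + sizeL ts
def sizeL : List PlaneTree → ℕ
  | [] => 0
  | t :: ts => size t + sizeL ts
end

mutual
/-- The Galton–Watson weight of a finite plane tree: the product over all vertices `u`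
of `μ (number of children of u)`. -/
noncomputable def weight (μ : ℕ → ℝ) : PlaneTree → ℝ
  | .node ts => μ ts.length * weightL μ ts
noncomputable def weightL (μ : ℕ → ℝ) : List PlaneTree → ℝ
  | [] => 1
  | t :: ts => weight μ t * weightL μ ts
end

end PlaneTree

/-- `P(|T| = n)` for a Galton–Watson tree with offspring distribution `μ`. -/
noncomputable def treeProb (μ : ℕ → ℝ) (n : ℕ) : ℝ :=
  ∑' t : PlaneTree, if t.size = n then t.weight μ else 0

namespace PlaneTree

theorem sizeL_append (a b : List PlaneTree) : sizeL (a ++ b) = sizeL a + sizeL b := by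
  induction a with
  | nil => simp [sizeL]
  | cons t ts ih => simp [sizeL, ih]; ring

theorem weightL_append (μ : ℕ → ℝ) (a b : List PlaneTree) :
    weightL μ (a ++ b) = weightL μ a * weightL μ b := by
  induction a with
  | nil => simp [weightL]
  | cons t ts ih => simp [weightL, ih]; ring

theorem size_pos (t : PlaneTree) : 1 ≤ size t := by
  cases t with
  | node ts => simp [size]

theorem length_le_sizeL (a : List PlaneTree) : a.length ≤ sizeL a := by
  induction a with
  | nil => simp [sizeL]
  | cons t ts ih =>
    have := size_pos t
    simp [sizeL]; omega

theorem sizeL_finite (n : ℕ) : {l : List PlaneTree | sizeL l = n}.Finite := by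
  induction n with
  | zero =>
    refine (Set.finite_singleton ([] : List PlaneTree)).subset ?_
    intro l hl
    have := length_le_sizeL l
    have h2 : sizeL l = 0 := hl
    rw [h2] at this
    simpa using this
  | succ n ih =>
    have hf : ((fun p : List PlaneTree × ℕ => (node (p.1.take p.2) :: p.1.drop p.2)) ''
      ({l : List PlaneTree | sizeL l = n} ×ˢ Set.Iic n)).Finite :=
      (ih.prod (Set.finite_Iic n)).image _
    refine hf.subset ?_
    intro l hl
    cases l with
    | nil => simp [sizeL] at hl
    | cons t rest =>
      cases t with
      | node ts =>
        have h2 : sizeL (node ts :: rest) = n + 1 := hl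
        simp only [sizeL, size] at h2
        have := length_le_sizeL ts
        refine ⟨(ts ++ rest, ts.length), ⟨?_, ?_⟩, ?_⟩
        · show sizeL (ts ++ rest) = n
          rw [sizeL_append]; omega
        · show ts.length ≤ n
          omega
        · simp

/-- Forests with `m` trees and `n` vertices. -/
noncomputable def forests (m n : ℕ) : Finset (List PlaneTree) :=
  ((sizeL_finite n).subset (t := {l : List PlaneTree | l.length = m ∧ sizeL l = n})
    (fun _ h => h.2)).toFinset

theorem mem_forests {m n : ℕ} {l : List PlaneTree} :
    l ∈ forests m n ↔ l.length = m ∧ sizeL l = n := by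
  simp [forests]

/-- Total weight of the forests with `m` trees and `n` vertices. -/
noncomputable def F (μ : ℕ → ℝ) (m n : ℕ) : ℝ := ∑ l ∈ forests m n, weightL μ l

theorem F_eq_zero (μ : ℕ → ℝ) {m n : ℕ} (h : n < m) : F μ m n = 0 := by
  have : forests m n = ∅ := by
    ext l
    simp only [mem_forests, Finset.notMem_empty, iff_false]
    rintro ⟨h1, h2⟩
    have := length_le_sizeL l
    omega
  simp [F, this]

theorem F_zero_zero (μ : ℕ → ℝ) : F μ 0 0 = 1 := by
  have : forests 0 0 = {[]} := by
    ext l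
    simp only [mem_forests, Finset.mem_singleton]
    constructor
    · rintro ⟨h1, h2⟩; simpa using h1
    · rintro rfl; simp [sizeL]
  simp [F, this, weightL]

theorem F_zero_succ (μ : ℕ → ℝ) (n : ℕ) : F μ 0 (n+1) = 0 := by
  have : forests 0 (n+1) = ∅ := by
    ext l
    simp only [mem_forests, Finset.notMem_empty, iff_false]
    rintro ⟨h1, h2⟩
    have : l = [] := by simpa using h1
    subst this
    simp [sizeL] at h2
  simp [F, this]

theorem F_succ (μ : ℕ → ℝ) (m n : ℕ) :
    F μ (m+1) (n+1) = ∑ k ∈ Finset.range (n+1), μ k * F μ (m+k) n := by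
  simp only [F, Finset.mul_sum]
  rw [Finset.sum_sigma']
  symm
  refine Finset.sum_bij' (fun p _ => node (p.2.take p.1) :: p.2.drop p.1)
    (fun l _ => match l with
      | [] => ⟨0, []⟩
      | node ts :: rest => ⟨ts.length, ts ++ rest⟩) ?_ ?_ ?_ ?_ ?_
  · rintro ⟨k, l⟩ h
    simp only [Finset.mem_sigma, mem_forests, Finset.mem_range] at h ⊢
    obtain ⟨h0, h1, h2⟩ := h
    constructor
    · simp; omega
    · have := sizeL_append (l.take k) (l.drop k)
      rw [List.take_append_drop] at this
      simp only [sizeL, size]; omega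
  · rintro l h
    rw [mem_forests] at h
    obtain ⟨h1, h2⟩ := h
    match l with
    | [] => simp at h1
    | node ts :: rest =>
      simp only [sizeL, size] at h2
      simp only [List.length_cons] at h1
      have := length_le_sizeL ts
      simp only [Finset.mem_sigma, mem_forests, Finset.mem_range, List.length_append, sizeL_append]
      omega
  · rintro ⟨k, l⟩ h
    simp only [Finset.mem_sigma, mem_forests, Finset.mem_range] at h
    obtain ⟨h0, h1, h2⟩ := h
    have : min k l.length = k := by omega
    simp [this]
  · rintro l h
    rw [mem_forests] at h
    obtain ⟨h1, h2⟩ := h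
    match l with
    | [] => simp at h1
    | node ts :: rest => simp
  · rintro ⟨k, l⟩ h
    simp only [Finset.mem_sigma, mem_forests, Finset.mem_range] at h
    obtain ⟨h0, h1, h2⟩ := h
    have hk : (l.take k).length = k := by simp; omega
    have := weightL_append μ (l.take k) (l.drop k)
    rw [List.take_append_drop] at this
    simp only [weightL, weight, hk, this]
    ring

end PlaneTree

open PlaneTree in
theorem treeProb_eq_F (μ : ℕ → ℝ) (n : ℕ) : treeProb μ n = F μ 1 n := by
  unfold treeProb F
  have hinj : Function.Injective (fun t : PlaneTree => [t]) := fun a b h => by simpa using h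
  have hfin : {t : PlaneTree | t.size = n}.Finite := by
    refine Set.Finite.of_finite_image (f := fun t => [t]) ((sizeL_finite n).subset ?_) hinj.injOn
    rintro _ ⟨t, ht, rfl⟩
    simpa [sizeL] using ht
  rw [tsum_eq_sum (s := hfin.toFinset)]
  · refine Finset.sum_bij (fun t _ => [t]) ?_ ?_ ?_ ?_
    · intro t ht
      simpa [mem_forests, sizeL] using ht
    · intro a _ b _ h; exact hinj h
    · intro l hl
      rw [mem_forests] at hl
      obtain ⟨h1, h2⟩ := hl
      obtain ⟨t, rfl⟩ := List.length_eq_one_iff.1 h1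
      exact ⟨t, by simpa [sizeL] using h2, rfl⟩
    · intro t ht
      have : t.size = n := by simpa using ht
      simp [this, weightL]
  · intro t ht
    have : ¬ t.size = n := by simpa using ht
    simp [this]

/-- Generating polynomial of the offspring distribution. -/
noncomputable def genPoly (μ : ℕ → ℝ) (K : ℕ) : Polynomial ℝ :=
  ∑ k ∈ Finset.range (K+1), Polynomial.monomial k (μ k)

theorem genPoly_coeff (μ : ℕ → ℝ) (K : ℕ) (hsupp : ∀ k, K < k → μ k = 0) (k : ℕ) :
    (genPoly μ K).coeff k = μ k := by
  simp only [genPoly, Polynomial.finsetSum_coeff, Polynomial.coeff_monomial]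
  rw [Finset.sum_ite_eq' (Finset.range (K+1)) k μ]
  split_ifs with h
  · rfl
  · exact (hsupp k (by simpa using h)).symm

open PlaneTree in
theorem F_formula (μ : ℕ → ℝ) (φ : Polynomial ℝ) (hφ : ∀ k, φ.coeff k = μ k) (n : ℕ) :
    ∀ m, m ≤ n → (n : ℝ) * F μ m n = m * (φ ^ n).coeff (n - m) := by
  induction n with
  | zero => intro m hm; obtain rfl : m = 0 := by omega
            simp
  | succ n ih =>
    intro m hm
    cases m with
    | zero => simp [F_zero_succ]
    | succ m =>
      have hmn : m ≤ n := by omega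
      have e1 : n + 1 - (m + 1) = n - m := by omega
      rw [e1, F_succ]
      have h1 : ∑ k ∈ Finset.range (n+1), μ k * F μ (m+k) n
          = ∑ k ∈ Finset.range (n-m+1), μ k * F μ (m+k) n := by
        symm
        apply Finset.sum_subset
        · intro k hk; simp at hk ⊢; omega
        · intro k _ hk2
          rw [F_eq_zero _ (by simp at hk2; omega), mul_zero]
      rw [h1]
      rcases Nat.eq_zero_or_pos n with rfl | hn
      · obtain rfl : m = 0 := by omega
        simp [F_zero_zero, hφ]
      have hc1 : (φ ^ (n+1)).coeff (n-m)
          = ∑ k ∈ Finset.range (n-m+1), μ k * (φ^n).coeff (n-m-k) := by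
        rw [pow_succ', Polynomial.coeff_mul, Finset.Nat.sum_antidiagonal_eq_sum_range_succ
          (fun i j => φ.coeff i * (φ^n).coeff j)]
        simp [hφ]
      have hc2 : ((n-m : ℕ) : ℝ) * (φ ^ (n+1)).coeff (n-m)
          = (n+1) * ∑ k ∈ Finset.range (n-m+1), (k * μ k) * (φ^n).coeff (n-m-k) := by
        have hX : ∀ (p : Polynomial ℝ) (j : ℕ), (Polynomial.X * Polynomial.derivative p).coeff j
            = j * p.coeff j := by
          intro p j
          cases j with
          | zero => simp
          | succ j => rw [Polynomial.coeff_X_mul, Polynomial.coeff_derivative]; push_cast; ring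
        have : Polynomial.X * Polynomial.derivative (φ^(n+1))
            = Polynomial.C ((n:ℝ)+1) * ((Polynomial.X * Polynomial.derivative φ) * φ^n) := by
          rw [Polynomial.derivative_pow_succ]; ring
        rw [← hX, this, Polynomial.coeff_C_mul, Polynomial.coeff_mul]
        simp only [hX, hφ]
        rw [Finset.Nat.sum_antidiagonal_eq_sum_range_succ
          (fun i j : ℕ => ((i : ℝ) * μ i) * (φ^n).coeff j)]
      have h2 : (n : ℝ) * ∑ k ∈ Finset.range (n-m+1), μ k * F μ (m+k) n
          = m * ∑ k ∈ Finset.range (n-m+1), μ k * (φ^n).coeff (n-m-k)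
            + ∑ k ∈ Finset.range (n-m+1), (k * μ k) * (φ^n).coeff (n-m-k) := by
        rw [Finset.mul_sum, Finset.mul_sum, ← Finset.sum_add_distrib]
        refine Finset.sum_congr rfl fun k hk => ?_
        have := ih (m+k) (by simp at hk; omega)
        rw [← Nat.sub_sub] at this
        push_cast at this
        linear_combination μ k * this
      rw [← hc1] at h2
      have hn' : (n:ℝ) ≠ 0 := by positivity
      apply mul_left_cancel₀ hn'
      push_cast [Nat.cast_sub hmn] at hc2 ⊢
      linear_combination (n+1 : ℝ) * h2 - hc2

open PlaneTree in
theorem treeProb_formula (μ : ℕ → ℝ) (φ : Polynomial ℝ) (hφ : ∀ k, φ.coeff k = μ k) (n : ℕ)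
    (hn : 1 ≤ n) : (n : ℝ) * treeProb μ n = (φ ^ n).coeff (n - 1) := by
  rw [treeProb_eq_F]
  simpa using F_formula μ φ hφ n 1 hn

/-- Rescaled characteristic function of the step distribution. -/
noncomputable def hchar (μ : ℕ → ℝ) (K d : ℕ) (θ : ℝ) : ℂ :=
  ∑ k ∈ Finset.range (K+1), (μ k : ℂ) * Complex.exp (((θ * ((k:ℝ) - 1) / d : ℝ) : ℂ) * Complex.I)

theorem hchar_continuous (μ : ℕ → ℝ) (K d : ℕ) : Continuous (hchar μ K d) := by
  unfold hchar
  fun_prop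

theorem genPoly_eval (μ : ℕ → ℝ) (K d : ℕ) (θ : ℝ) :
    hchar μ K d θ * Complex.exp (((θ / d : ℝ) : ℂ) * Complex.I) =
      Polynomial.eval₂ (algebraMap ℝ ℂ) (Complex.exp (((θ / d : ℝ) : ℂ) * Complex.I))
        (genPoly μ K) := by
  unfold hchar genPoly
  rw [Polynomial.eval₂_finsetSum, Finset.sum_mul]
  refine Finset.sum_congr rfl fun k _ => ?_
  rw [Polynomial.eval₂_monomial, ← Complex.exp_nat_mul, mul_assoc, ← Complex.exp_add]
  simp only [Complex.coe_algebraMap]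
  congr 2
  push_cast
  ring

theorem integral_char (q : ℤ) :
    ∫ θ in (-Real.pi)..Real.pi, Complex.exp (((q * θ : ℝ) : ℂ) * Complex.I)
      = if q = 0 then (2 * Real.pi : ℂ) else 0 := by
  split_ifs with h
  · subst h
    simp
    ring
  · have hc : (q : ℂ) * Complex.I ≠ 0 := by simp [h]
    have h1 : ∀ θ : ℝ, Complex.exp (((q * θ : ℝ) : ℂ) * Complex.I)
        = Complex.exp ((q : ℂ) * Complex.I * θ) := by
      intro θ; congr 1; push_cast; ring
    simp only [h1]
    rw [integral_exp_mul_complex hc]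
    have : Complex.exp ((q : ℂ) * Complex.I * (Real.pi : ℝ))
        = Complex.exp ((q : ℂ) * Complex.I * ((-Real.pi : ℝ) : ℂ)) := by
      rw [Complex.exp_eq_exp_iff_exists_int]
      exact ⟨q, by push_cast; ring⟩
    rw [this]; simp

theorem coeff_pow_dvd (φ : Polynomial ℝ) (d : ℕ) (hd : 0 < d)
    (h : ∀ k, 1 ≤ k → φ.coeff k ≠ 0 → d ∣ k) (n j : ℕ) (hj : (φ ^ n).coeff j ≠ 0) : d ∣ j := by
  have h1 : φ = Polynomial.expand ℝ d (Polynomial.contract d φ) := by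
    ext k
    rw [Polynomial.coeff_expand hd, Polynomial.coeff_contract hd.ne']
    split_ifs with hk
    · rw [Nat.div_mul_cancel hk]
    · by_contra h0
      rcases Nat.eq_zero_or_pos k with rfl | hk0
      · simp at hk
      · exact hk (h k hk0 h0)
  rw [h1, ← map_pow, Polynomial.coeff_expand hd] at hj
  by_contra h2
  simp [h2] at hj

theorem inversion (μ : ℕ → ℝ) (K d : ℕ) (hd : 0 < d)
    (hsupp : ∀ k, K < k → μ k = 0)
    (hd_div : ∀ k, 1 ≤ k → μ k ≠ 0 → d ∣ k) (m : ℕ) (hm : d ∣ m) :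
    ∫ θ in (-Real.pi)..Real.pi, hchar μ K d θ ^ (m+1) *
        Complex.exp (((θ / d : ℝ) : ℂ) * Complex.I)
      = 2 * Real.pi * ((genPoly μ K ^ (m+1)).coeff m : ℝ) := by
  set φ := genPoly μ K with hφ
  set P := φ ^ (m+1) with hP
  have hdvd : ∀ j, P.coeff j ≠ 0 → d ∣ j := by
    intro j hj
    refine coeff_pow_dvd φ d hd ?_ (m+1) j hj
    intro k hk hk2
    rw [hφ, genPoly_coeff μ K hsupp] at hk2
    exact hd_div k hk hk2
  have hd0 : (d : ℂ) ≠ 0 := by exact_mod_cast hd.ne'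
  obtain ⟨a, rfl⟩ := hm
  have h1 : ∀ θ : ℝ, hchar μ K d θ ^ (d*a+1) * Complex.exp (((θ / d : ℝ) : ℂ) * Complex.I)
      = ∑ j ∈ Finset.range (P.natDegree + 1), (P.coeff j : ℂ) *
        Complex.exp (((((j/d : ℕ) : ℤ) - a : ℤ) * θ : ℝ) * Complex.I) := by
    intro θ
    have e := genPoly_eval μ K d θ
    set z := Complex.exp (((θ / d : ℝ) : ℂ) * Complex.I) with hz
    have hz0 : z ≠ 0 := Complex.exp_ne_zero _
    have e2 : hchar μ K d θ ^ (d*a+1) * z * z ^ (d*a) = Polynomial.eval₂ (algebraMap ℝ ℂ) z P := by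
      rw [hP, Polynomial.eval₂_pow, ← e, mul_pow]; ring
    apply mul_right_cancel₀ (pow_ne_zero (d*a) hz0)
    rw [e2, Polynomial.eval₂_eq_sum_range, Finset.sum_mul]
    refine Finset.sum_congr rfl fun j _ => ?_
    by_cases hj : P.coeff j = 0
    · simp [hj]
    · obtain ⟨b, rfl⟩ := hdvd j hj
      rw [Nat.mul_div_cancel_left _ hd, hz, ← Complex.exp_nat_mul, ← Complex.exp_nat_mul,
        mul_assoc, ← Complex.exp_add]
      simp only [Complex.coe_algebraMap]
      congr 2
      push_cast
      field_simp
      ring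
  simp only [h1]
  rw [intervalIntegral.integral_finsetSum]
  swap
  · intro j _
    apply Continuous.intervalIntegrable
    fun_prop
  simp only [intervalIntegral.integral_const_mul, integral_char]
  rw [Finset.sum_eq_single (d*a)]
  · rw [Nat.mul_div_cancel_left _ hd]
    simp
    ring
  · intro j _ hj
    by_cases hj0 : P.coeff j = 0
    · simp [hj0]
    · obtain ⟨b, rfl⟩ := hdvd j hj0
      rw [Nat.mul_div_cancel_left _ hd, if_neg, mul_zero]
      intro h
      apply hj
      have : b = a := by omega
      rw [this]
  · intro h
    rw [Polynomial.coeff_eq_zero_of_natDegree_lt (by simpa using h)]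
    simp

theorem hchar_normSq (μ : ℕ → ℝ) (K d : ℕ) (hμ1 : ∑ k ∈ Finset.range (K + 1), μ k = 1) (θ : ℝ) :
    ‖hchar μ K d θ‖ ^ 2 = 1 - ∑ j ∈ Finset.range (K+1), ∑ k ∈ Finset.range (K+1),
      μ j * μ k * (1 - Real.cos (θ * ((j:ℝ) - k) / d)) := by
  have hre : (hchar μ K d θ).re =
      ∑ k ∈ Finset.range (K+1), μ k * Real.cos (θ * ((k:ℝ) - 1) / d) := by
    unfold hchar
    rw [Complex.re_sum]
    refine Finset.sum_congr rfl fun k _ => ?_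
    rw [Complex.re_ofReal_mul, Complex.exp_ofReal_mul_I_re]
  have him : (hchar μ K d θ).im =
      ∑ k ∈ Finset.range (K+1), μ k * Real.sin (θ * ((k:ℝ) - 1) / d) := by
    unfold hchar
    rw [Complex.im_sum]
    refine Finset.sum_congr rfl fun k _ => ?_
    rw [Complex.im_ofReal_mul, Complex.exp_ofReal_mul_I_im]
  rw [Complex.sq_norm, Complex.normSq_apply, hre, him]
  have h1 : (1:ℝ) = ∑ j ∈ Finset.range (K+1), ∑ k ∈ Finset.range (K+1), μ j * μ k := by
    rw [← Finset.sum_mul_sum, hμ1]; norm_num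
  refine Eq.trans ?_ (congrArg (fun x : ℝ => x - ∑ j ∈ Finset.range (K+1),
    ∑ k ∈ Finset.range (K+1), μ j * μ k * (1 - Real.cos (θ * ((j:ℝ) - k) / d))) h1.symm)
  rw [Finset.sum_mul_sum, Finset.sum_mul_sum, ← Finset.sum_add_distrib, ← Finset.sum_sub_distrib]
  refine Finset.sum_congr rfl fun j _ => ?_
  rw [← Finset.sum_add_distrib, ← Finset.sum_sub_distrib]
  refine Finset.sum_congr rfl fun k _ => ?_
  have : θ * ((j:ℝ) - k) / d = θ * ((j:ℝ) - 1) / d - θ * ((k:ℝ) - 1) / d := by ring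
  rw [this, Real.cos_sub]
  ring

theorem mu_zero_pos (μ : ℕ → ℝ) (K : ℕ) (σ2 : ℝ)
    (hμ0 : ∀ k, 0 ≤ μ k)
    (hμ1 : ∑ k ∈ Finset.range (K + 1), μ k = 1)
    (hmean : ∑ k ∈ Finset.range (K + 1), (k : ℝ) * μ k = 1)
    (hvar : σ2 = ∑ k ∈ Finset.range (K + 1), (k : ℝ) ^ 2 * μ k - 1)
    (hσpos : 0 < σ2) : 0 < μ 0 := by
  rcases (hμ0 0).lt_or_eq with h | h
  · exact h
  exfalso
  have h1 : ∑ k ∈ Finset.range (K+1), ((k:ℝ) - 1) * μ k = 0 := by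
    simp only [sub_mul, Finset.sum_sub_distrib, one_mul, hmean, hμ1, sub_self]
  have hnn : ∀ k ∈ Finset.range (K+1), 0 ≤ ((k:ℝ) - 1) * μ k := by
    intro k _
    cases k with
    | zero => simp [← h]
    | succ k => push_cast; rw [add_sub_cancel_right]; exact mul_nonneg (Nat.cast_nonneg k) (hμ0 (k+1))
  rw [Finset.sum_eq_zero_iff_of_nonneg hnn] at h1
  have h2 : ∑ k ∈ Finset.range (K + 1), (k : ℝ) ^ 2 * μ k =
      ∑ k ∈ Finset.range (K + 1), (k:ℝ) * μ k := by
    refine Finset.sum_congr rfl fun k hk => ?_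
    linear_combination (k:ℝ) * h1 k hk
  rw [h2, hmean] at hvar
  linarith

theorem hchar_bound (μ : ℕ → ℝ) (K : ℕ) (σ2 : ℝ) (d : ℕ)
    (hμ0 : ∀ k, 0 ≤ μ k)
    (hsupp : ∀ k, K < k → μ k = 0)
    (hμ1 : ∑ k ∈ Finset.range (K + 1), μ k = 1)
    (hmean : ∑ k ∈ Finset.range (K + 1), (k : ℝ) * μ k = 1)
    (hvar : σ2 = ∑ k ∈ Finset.range (K + 1), (k : ℝ) ^ 2 * μ k - 1)
    (hσpos : 0 < σ2)
    (hd_pos : 0 < d)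
    (hd_gcd : ∀ e : ℕ, (∀ k, 1 ≤ k → μ k ≠ 0 → e ∣ k) → e ∣ d) :
    ∃ c : ℝ, 0 < c ∧ ∀ θ : ℝ, |θ| ≤ Real.pi → ‖hchar μ K d θ‖ ^ 2 ≤ 1 - c * θ ^ 2 := by
  have hm0 := mu_zero_pos μ K σ2 hμ0 hμ1 hmean hvar hσpos
  have hπ := Real.pi_pos
  have hd' : (0:ℝ) < d := by exact_mod_cast hd_pos
  set D : ℝ → ℝ := fun θ => ∑ j ∈ Finset.range (K+1), ∑ k ∈ Finset.range (K+1),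
      μ j * μ k * (1 - Real.cos (θ * ((j:ℝ) - k) / d)) with hD
  have hDc : Continuous D := by fun_prop
  have hterm : ∀ (θ : ℝ) (j k : ℕ), 0 ≤ μ j * μ k * (1 - Real.cos (θ * ((j:ℝ) - k) / d)) := by
    intro θ j k
    have := Real.cos_le_one (θ * ((j:ℝ) - k) / d)
    exact mul_nonneg (mul_nonneg (hμ0 j) (hμ0 k)) (by linarith)
  set δ : ℝ := Real.pi * d / (K+1) with hδ
  have hδpos : 0 < δ := by positivity
  have hcpt : IsCompact (Set.Icc (-Real.pi) Real.pi ∩ {θ : ℝ | δ ≤ |θ|}) :=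
    isCompact_Icc.inter_right (isClosed_le continuous_const continuous_abs)
  have hpos : ∀ θ ∈ (Set.Icc (-Real.pi) Real.pi ∩ {θ : ℝ | δ ≤ |θ|}), 0 < D θ := by
    rintro θ ⟨hθ1, hθ2⟩
    have hθ0 : θ ≠ 0 := by
      rintro rfl
      simp at hθ2
      linarith
    have hDnn : 0 ≤ D θ := Finset.sum_nonneg fun j _ => Finset.sum_nonneg fun k _ => hterm θ j k
    refine lt_of_le_of_ne hDnn fun h0 => hθ0 ?_
    have hz := (Finset.sum_eq_zero_iff_of_nonneg
      (fun j _ => Finset.sum_nonneg fun k _ => hterm θ j k)).1 h0.symm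
    have hord : orderOf (Complex.exp (((θ / d : ℝ) : ℂ) * Complex.I)) ∣ d := by
      apply hd_gcd
      intro k hk hk0
      rw [orderOf_dvd_iff_pow_eq_one, ← Complex.exp_nat_mul]
      have hkK : k ∈ Finset.range (K+1) := by
        by_contra h
        exact hk0 (hsupp k (by simpa using h))
      have h1 := (Finset.sum_eq_zero_iff_of_nonneg (fun i _ => hterm θ k i)).1 (hz k hkK) 0 (by simp)
      have h2 : Real.cos (θ * ((k:ℝ) - (0:ℕ)) / d) = 1 := by
        have : μ k * μ 0 ≠ 0 := mul_ne_zero hk0 hm0.ne'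
        have := (mul_eq_zero.1 h1).resolve_left this
        linarith
      obtain ⟨q, hq⟩ := (Real.cos_eq_one_iff _).1 h2
      rw [Complex.exp_eq_one_iff]
      refine ⟨q, ?_⟩
      have h3 : (k:ℝ) * (θ / d) = q * (2 * Real.pi) := by rw [hq]; push_cast; ring
      have h4 : (k:ℂ) * ((θ / d : ℝ) : ℂ) = q * (2 * Real.pi) := by exact_mod_cast h3
      linear_combination Complex.I * h4
    rw [orderOf_dvd_iff_pow_eq_one, ← Complex.exp_nat_mul] at hord
    have h5 : Complex.exp ((θ:ℂ) * Complex.I) = 1 := by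
      rw [← hord]; congr 1; push_cast
      have : (d:ℂ) ≠ 0 := by exact_mod_cast hd_pos.ne'
      field_simp
    have h6 : Real.cos θ = 1 := by
      have := congrArg Complex.re h5
      rwa [Complex.exp_ofReal_mul_I_re, Complex.one_re] at this
    exact (Real.cos_eq_one_iff_of_lt_of_lt (by linarith [hθ1.1]) (by linarith [hθ1.2])).1 h6
  obtain ⟨m, hm, hmle⟩ := hcpt.exists_forall_le' hDc.continuousOn hpos
  have hsmall : ∀ θ : ℝ, |θ| ≤ δ → 4 * σ2 / (Real.pi^2 * d^2) * θ^2 ≤ D θ := by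
    intro θ hθ
    have hs : 4 * σ2 / (Real.pi^2 * d^2) * θ^2 = ∑ j ∈ Finset.range (K+1),
        ∑ k ∈ Finset.range (K+1), μ j * μ k * (2 / Real.pi^2 * (θ * ((j:ℝ) - k) / d)^2) := by
      have e1 : ∀ j k : ℕ, μ j * μ k * (2 / Real.pi^2 * (θ * ((j:ℝ) - k) / d)^2)
        = (2 / (Real.pi^2 * d^2) * θ^2) * (((j:ℝ)^2 * μ j) * μ k + μ j * ((k:ℝ)^2 * μ k)
            - 2 * ((j * μ j) * (k * μ k))) := by
        intro j k; field_simp; ring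
      simp only [e1, ← Finset.mul_sum, Finset.sum_add_distrib, Finset.sum_sub_distrib]
      simp only [← Finset.sum_mul, hμ1, hmean]
      have : ∑ k ∈ Finset.range (K + 1), (k : ℝ) ^ 2 * μ k = σ2 + 1 := by linarith
      rw [this]
      ring
    rw [hs]
    refine Finset.sum_le_sum fun j hj => Finset.sum_le_sum fun k hk => ?_
    refine mul_le_mul_of_nonneg_left ?_ (mul_nonneg (hμ0 j) (hμ0 k))
    have hjk : |(j:ℝ) - k| ≤ K + 1 := by
      have h1 : (j:ℝ) ≤ K := by
        have := Finset.mem_range.1 hj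
        exact_mod_cast (by omega : j ≤ K)
      have h2 : (k:ℝ) ≤ K := by
        have := Finset.mem_range.1 hk
        exact_mod_cast (by omega : k ≤ K)
      rw [abs_le]; constructor <;> linarith [Nat.cast_nonneg (α := ℝ) j, Nat.cast_nonneg (α := ℝ) k]
    have : |θ * ((j:ℝ) - k) / d| ≤ Real.pi := by
      rw [abs_div, abs_mul, abs_of_pos hd', div_le_iff₀ hd']
      calc |θ| * |(j:ℝ) - k| ≤ δ * (K+1) := by gcongr
        _ = Real.pi * d := by rw [hδ]; field_simp
    have := Real.cos_le_one_sub_mul_cos_sq this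
    linarith
  refine ⟨min (4 * σ2 / (Real.pi^2 * d^2)) (m / Real.pi^2), by positivity, ?_⟩
  intro θ hθ
  rw [hchar_normSq μ K d hμ1]
  have : min (4 * σ2 / (Real.pi^2 * d^2)) (m / Real.pi^2) * θ^2 ≤ D θ := by
    rcases le_total |θ| δ with h | h
    · refine le_trans ?_ (hsmall θ h)
      gcongr
      exact min_le_left _ _
    · have h1 := hmle θ ⟨abs_le.1 hθ, h⟩
      refine le_trans ?_ h1
      calc _ ≤ m / Real.pi^2 * θ^2 := by gcongr; exact min_le_right _ _
        _ ≤ m / Real.pi^2 * Real.pi^2 := by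
          have := sq_le_sq' (abs_le.1 hθ).1 (abs_le.1 hθ).2
          gcongr ?_ * ?_
        _ = m := by field_simp
  linarith

open Filter Topology in
theorem exp_second_order (y : ℝ) :
    Tendsto (fun n : ℕ => (n:ℂ) * (Complex.exp (((y / Real.sqrt n : ℝ) : ℂ) * Complex.I) - 1
      - ((y / Real.sqrt n : ℝ) : ℂ) * Complex.I)) atTop (𝓝 (((-y^2/2 : ℝ)) : ℂ)) := by
  rw [← tendsto_sub_nhds_zero_iff]
  have hlim : Tendsto (fun n : ℕ => |y|^3 * (2/9) / Real.sqrt n) atTop (𝓝 0) :=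
    Tendsto.div_atTop tendsto_const_nhds
      (Real.tendsto_sqrt_atTop.comp tendsto_natCast_atTop_atTop)
  refine squeeze_zero_norm' ?_ hlim
  filter_upwards [eventually_ge_atTop 1, eventually_ge_atTop ⌈y^2⌉₊] with n hn1 hn2
  have hn0 : (0:ℝ) < n := by exact_mod_cast hn1
  have hs : 0 < Real.sqrt n := Real.sqrt_pos.2 hn0
  have hss : Real.sqrt n ^ 2 = n := Real.sq_sqrt hn0.le
  set z : ℂ := ((y / Real.sqrt n : ℝ) : ℂ) * Complex.I with hz
  have hzn : ‖z‖ = |y| / Real.sqrt n := by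
    rw [hz, norm_mul, Complex.norm_I, mul_one, Complex.norm_real, Real.norm_eq_abs, abs_div,
      abs_of_pos hs]
  have hy : |y| ≤ Real.sqrt n := by
    apply Real.abs_le_sqrt
    exact (Nat.le_ceil _).trans (by exact_mod_cast hn2)
  have hz1 : ‖z‖ ≤ 1 := by
    rw [hzn, div_le_one hs]; exact hy
  have hb := Complex.exp_bound hz1 (n := 3) (by norm_num)
  have hz2 : (n:ℂ) * z^2 = -((y^2 : ℝ) : ℂ) := by
    have : (n:ℝ) * (y / Real.sqrt n)^2 = y^2 := by
      rw [div_pow, hss]; field_simp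
    rw [hz, mul_pow, Complex.I_sq, ← this]
    push_cast; ring
  have he : (n:ℂ) * (Complex.exp z - 1 - z) - ((-y^2/2 : ℝ) : ℂ)
      = n * (Complex.exp z - ∑ m ∈ Finset.range 3, z ^ m / (m.factorial : ℂ)) := by
    simp only [Finset.sum_range_succ, Finset.sum_range_zero, Nat.factorial]
    push_cast at hz2 ⊢
    linear_combination (1/2 : ℂ) * hz2
  rw [he, norm_mul, Complex.norm_natCast]
  calc (n:ℝ) * _ ≤ n * _ := mul_le_mul_of_nonneg_left hb hn0.le
    _ = |y|^3 * (2/9) / Real.sqrt n := by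
      rw [hzn]
      simp only [Nat.factorial]
      norm_num
      rw [← hss]
      field_simp
      norm_num
      ring

open Filter Topology in
theorem hchar_tendsto (μ : ℕ → ℝ) (K : ℕ) (σ2 : ℝ) (d : ℕ)
    (hμ1 : ∑ k ∈ Finset.range (K + 1), μ k = 1)
    (hmean : ∑ k ∈ Finset.range (K + 1), (k : ℝ) * μ k = 1)
    (hvar : σ2 = ∑ k ∈ Finset.range (K + 1), (k : ℝ) ^ 2 * μ k - 1)
    (s : ℝ) :
    Tendsto (fun n : ℕ => hchar μ K d (s / Real.sqrt n) ^ n) atTop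
      (𝓝 (Complex.exp ((-(σ2 / (2 * d^2)) * s^2 : ℝ) : ℂ))) := by
  have key : Tendsto (fun n : ℕ => (n:ℂ) * (hchar μ K d (s / Real.sqrt n) - 1)) atTop
      (𝓝 ((-(σ2 / (2 * d^2)) * s^2 : ℝ) : ℂ)) := by
    have h1 : Tendsto (fun n : ℕ => ∑ k ∈ Finset.range (K+1), (μ k : ℂ) *
        ((n:ℂ) * (Complex.exp ((((s * ((k:ℝ)-1)/d) / Real.sqrt n : ℝ) : ℂ) * Complex.I) - 1
      - (((s * ((k:ℝ)-1)/d) / Real.sqrt n : ℝ) : ℂ) * Complex.I))) atTop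
        (𝓝 (∑ k ∈ Finset.range (K+1), (μ k : ℂ) * ((-(s * ((k:ℝ)-1)/d)^2/2 : ℝ) : ℂ))) :=
      tendsto_finsetSum _ fun k _ => (exp_second_order _).const_mul _
    have e1 : ∑ k ∈ Finset.range (K+1), (μ k : ℂ) * ((-(s * ((k:ℝ)-1)/d)^2/2 : ℝ) : ℂ)
        = ((-(σ2 / (2 * d^2)) * s^2 : ℝ) : ℂ) := by
      have : ∑ k ∈ Finset.range (K+1), μ k * (-(s * ((k:ℝ)-1)/d)^2/2)
        = (-(σ2 / (2 * d^2)) * s^2) := by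
        have e : ∀ k : ℕ, μ k * (-(s * ((k:ℝ)-1)/d)^2/2)
          = (-(1 / (2 * d^2)) * s^2) * ((k:ℝ)^2 * μ k - 2 * (k * μ k) + μ k) := by
          intro k; field_simp; ring
        simp only [e, ← Finset.mul_sum, Finset.sum_add_distrib, Finset.sum_sub_distrib, hμ1, hmean]
        rw [hvar]; ring
      rw [← this]; push_cast; rfl
    rw [e1] at h1
    refine h1.congr fun n => ?_
    have e2 : ∀ k : ℕ, (μ k : ℂ) *
        ((n:ℂ) * (Complex.exp ((((s * ((k:ℝ)-1)/d) / Real.sqrt n : ℝ) : ℂ) * Complex.I) - 1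
      - (((s * ((k:ℝ)-1)/d) / Real.sqrt n : ℝ) : ℂ) * Complex.I))
      = n * ((μ k : ℂ) * Complex.exp (((s / Real.sqrt n * ((k:ℝ) - 1) / d : ℝ) : ℂ) * Complex.I))
        - n * (μ k : ℂ)
        - (n * ((s / Real.sqrt n / d : ℝ) : ℂ) * Complex.I) * ((k : ℂ) * μ k - μ k) := by
      intro k
      have : (s * ((k:ℝ)-1)/d) / Real.sqrt n = s / Real.sqrt n * ((k:ℝ) - 1) / d := by ring
      rw [this]
      have : ((s / Real.sqrt n * ((k:ℝ) - 1) / d : ℝ) : ℂ)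
        = ((s / Real.sqrt n / d : ℝ) : ℂ) * (k - 1) := by push_cast; ring
      rw [mul_sub, mul_sub, mul_sub, mul_sub, mul_one]
      nth_rewrite 2 [this]
      ring
    have hμ1' : ∑ k ∈ Finset.range (K + 1), (μ k : ℂ) = 1 := by exact_mod_cast hμ1
    have hmean' : ∑ k ∈ Finset.range (K + 1), (k : ℂ) * (μ k : ℂ) = 1 := by exact_mod_cast hmean
    simp only [e2, Finset.sum_sub_distrib, ← Finset.mul_sum, hμ1', hmean']
    simp only [hchar]
    ring
  have := Complex.tendsto_one_add_pow_exp_of_tendsto key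
  simpa using this

open Filter Topology MeasureTheory in
theorem llt (μ : ℕ → ℝ) (K : ℕ) (σ2 : ℝ) (d : ℕ)
    (hμ0 : ∀ k, 0 ≤ μ k)
    (hsupp : ∀ k, K < k → μ k = 0)
    (hμ1 : ∑ k ∈ Finset.range (K + 1), μ k = 1)
    (hmean : ∑ k ∈ Finset.range (K + 1), (k : ℝ) * μ k = 1)
    (hvar : σ2 = ∑ k ∈ Finset.range (K + 1), (k : ℝ) ^ 2 * μ k - 1)
    (hσpos : 0 < σ2)
    (hd_pos : 0 < d)
    (hd_gcd : ∀ e : ℕ, (∀ k, 1 ≤ k → μ k ≠ 0 → e ∣ k) → e ∣ d) :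
    Tendsto (fun n : ℕ => (Real.sqrt n : ℂ) * ∫ θ in (-Real.pi)..Real.pi, hchar μ K d θ ^ n *
        Complex.exp (((θ / d : ℝ) : ℂ) * Complex.I)) atTop
      (𝓝 ((Real.sqrt (Real.pi / (σ2 / (2 * d^2))) : ℝ) : ℂ)) := by
  obtain ⟨c, hc, hbound⟩ := hchar_bound μ K σ2 d hμ0 hsupp hμ1 hmean hvar hσpos hd_pos hd_gcd
  have hπ := Real.pi_pos
  set G : ℕ → ℝ → ℂ := fun n => (Set.Ioc (-Real.pi * Real.sqrt n) (Real.pi * Real.sqrt n)).indicator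
    (fun s => hchar μ K d (s / Real.sqrt n) ^ n *
      Complex.exp (((s / Real.sqrt n / d : ℝ) : ℂ) * Complex.I)) with hG
  have hlim : Tendsto (fun n => ∫ s, G n s) atTop
      (𝓝 (∫ s : ℝ, Complex.exp ((-(σ2 / (2 * d^2)) * s^2 : ℝ) : ℂ))) := by
    refine tendsto_integral_of_dominated_convergence (fun s => Real.exp (-(c/2) * s^2)) ?_
      (integrable_exp_neg_mul_sq (by positivity)) ?_ ?_
    · intro n
      refine (Continuous.aestronglyMeasurable ?_).indicator measurableSet_Ioc
      have := hchar_continuous μ K d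
      fun_prop
    · intro n
      refine Eventually.of_forall fun s => ?_
      by_cases hs : s ∈ Set.Ioc (-Real.pi * Real.sqrt n) (Real.pi * Real.sqrt n)
      · simp only [hG, Set.indicator_of_mem hs]
        rw [norm_mul, Complex.norm_exp_ofReal_mul_I, mul_one, norm_pow]
        have hn : 0 < Real.sqrt n := by
          have := hs.1.trans_le hs.2
          by_contra h
          have h0 : Real.sqrt n = 0 := le_antisymm (not_lt.1 h) (Real.sqrt_nonneg _)
          simp [h0] at this
        have hn' : (0:ℝ) < n := Real.sqrt_pos.1 hn
        have hle : |s / Real.sqrt n| ≤ Real.pi := by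
          rw [abs_div, abs_of_pos hn, div_le_iff₀ hn, abs_le]
          exact ⟨by linarith [hs.1], hs.2⟩
        have h1 := hbound _ hle
        have h2 : 1 - c * (s / Real.sqrt n)^2 ≤ Real.exp (-(c * (s / Real.sqrt n)^2)) := by
          linarith [Real.add_one_le_exp (-(c * (s / Real.sqrt n)^2))]
        have h3 : (‖hchar μ K d (s / Real.sqrt n)‖ ^ n) ^ 2 ≤ (Real.exp (-(c/2) * s^2)) ^ 2 := by
          rw [← pow_mul, mul_comm n 2, pow_mul]
          calc _ ≤ Real.exp (-(c * (s / Real.sqrt n)^2)) ^ n :=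
                pow_le_pow_left₀ (by positivity) (h1.trans h2) n
            _ = _ := by
              rw [← Real.exp_nat_mul, ← Real.exp_nat_mul, div_pow, Real.sq_sqrt hn'.le]
              congr 1
              push_cast
              field_simp
        exact (pow_le_pow_iff_left₀ (by positivity) (by positivity) two_ne_zero).1 h3
      · simp only [hG, Set.indicator_of_notMem hs, norm_zero]
        positivity
    · refine Eventually.of_forall fun s => ?_
      have h1 := hchar_tendsto μ K σ2 d hμ1 hmean hvar s
      have hsq : Tendsto (fun n : ℕ => Real.sqrt n) atTop atTop :=
        Real.tendsto_sqrt_atTop.comp tendsto_natCast_atTop_atTop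
      have h2 : Tendsto (fun n : ℕ => Complex.exp (((s / Real.sqrt n / d : ℝ) : ℂ) * Complex.I))
          atTop (𝓝 1) := by
        have h3 : Tendsto (fun n : ℕ => s / Real.sqrt n) atTop (𝓝 0) :=
          Tendsto.div_atTop tendsto_const_nhds hsq
        have h4 : Continuous (fun x : ℝ => Complex.exp (((x / d : ℝ) : ℂ) * Complex.I)) := by
          fun_prop
        have := (h4.tendsto 0).comp h3
        simpa [Function.comp_def] using this
      have h5 := h1.mul h2
      rw [mul_one] at h5
      refine h5.congr' ?_
      filter_upwards [hsq.eventually_gt_atTop (|s| / Real.pi)] with n hn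
      have : |s| < Real.pi * Real.sqrt n := by
        rw [div_lt_iff₀ hπ] at hn; linarith
      rw [abs_lt] at this
      have hs : s ∈ Set.Ioc (-Real.pi * Real.sqrt n) (Real.pi * Real.sqrt n) :=
        ⟨by linarith [this.1], this.2.le⟩
      simp only [hG, Set.indicator_of_mem hs]
  have hval : (∫ s : ℝ, Complex.exp ((-(σ2 / (2 * d^2)) * s^2 : ℝ) : ℂ))
      = ((Real.sqrt (Real.pi / (σ2 / (2 * d^2))) : ℝ) : ℂ) := by
    rw [← integral_gaussian, ← integral_complex_ofReal]
    simp only [Complex.ofReal_exp]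
  rw [hval] at hlim
  refine hlim.congr' ?_
  filter_upwards [eventually_ge_atTop 1] with n hn
  have hn0 : (0:ℝ) < n := by exact_mod_cast hn
  have hs : 0 < Real.sqrt n := Real.sqrt_pos.2 hn0
  simp only [hG]
  rw [integral_indicator measurableSet_Ioc, ← intervalIntegral.integral_of_le
    (by nlinarith),
    intervalIntegral.integral_comp_div (fun θ => hchar μ K d θ ^ n *
      Complex.exp (((θ / d : ℝ) : ℂ) * Complex.I)) hs.ne',
    mul_div_cancel_right₀ _ hs.ne', mul_div_cancel_right₀ _ hs.ne', Complex.real_smul]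

/-- For a nondegenerate critical offspring distribution `μ` with bounded support,
nonzero variance `σ²` and span `d`, one has `P(|T| = n) ∼ d n^{-3/2}/(σ√(2π))`
as `n → ∞` along integers with `P(|T| = n) > 0`. -/
theorem gw_total_progeny_asymptotics (μ : ℕ → ℝ) (K : ℕ) (σ2 : ℝ) (d : ℕ)
    (hμ0 : ∀ k, 0 ≤ μ k)
    (hsupp : ∀ k, K < k → μ k = 0)
    (hμ1 : ∑ k ∈ Finset.range (K + 1), μ k = 1)
    (hmean : ∑ k ∈ Finset.range (K + 1), (k : ℝ) * μ k = 1)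
    (hvar : σ2 = ∑ k ∈ Finset.range (K + 1), (k : ℝ) ^ 2 * μ k - 1)
    (hσpos : 0 < σ2)
    (hnd : μ 0 + μ 1 ≠ 1)
    (hd_pos : 0 < d)
    (hd_div : ∀ k, 1 ≤ k → μ k ≠ 0 → d ∣ k)
    (hd_gcd : ∀ e : ℕ, (∀ k, 1 ≤ k → μ k ≠ 0 → e ∣ k) → e ∣ d) :
    ∀ ε : ℝ, 0 < ε → ∃ N : ℕ, ∀ n : ℕ, N ≤ n → treeProb μ n ≠ 0 →
      |treeProb μ n /
          ((d : ℝ) * (n : ℝ) ^ (-(3:ℝ)/2) / (Real.sqrt σ2 * Real.sqrt (2 * Real.pi))) - 1|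
        < ε := by
  intro ε hε
  have hlim := llt μ K σ2 d hμ0 hsupp hμ1 hmean hvar hσpos hd_pos hd_gcd
  have hπ := Real.pi_pos
  have hd' : (0:ℝ) < d := by exact_mod_cast hd_pos
  set A : ℝ := Real.sqrt (Real.pi / (σ2 / (2 * d^2))) with hA
  have hApos : 0 < A := Real.sqrt_pos.2 (by positivity)
  obtain ⟨N, hN⟩ := Metric.tendsto_atTop.1 hlim (ε * A) (by positivity)
  refine ⟨max N 1, fun n hn hne => ?_⟩
  have hn1 : 1 ≤ n := le_trans (le_max_right _ _) hn
  have hnN := hN n (le_trans (le_max_left _ _) hn)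
  have hn0 : (0:ℝ) < n := by exact_mod_cast hn1
  have hform := treeProb_formula μ (genPoly μ K) (genPoly_coeff μ K hsupp) n hn1
  have hcne : (genPoly μ K ^ n).coeff (n-1) ≠ 0 := by
    rw [← hform]; exact mul_ne_zero hn0.ne' hne
  have hdvd : d ∣ n - 1 := by
    refine coeff_pow_dvd (genPoly μ K) d hd_pos ?_ n (n-1) hcne
    intro k hk hk0
    rw [genPoly_coeff μ K hsupp] at hk0
    exact hd_div k hk hk0
  have hinv := inversion μ K d hd_pos hsupp hd_div (n-1) hdvd
  rw [Nat.sub_add_cancel hn1] at hinv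
  rw [hinv, ← hform] at hnN
  have hnN' : |Real.sqrt n * (2 * Real.pi * (n * treeProb μ n)) - A| < ε * A := by
    have e : (Real.sqrt n : ℂ) * (2 * (Real.pi : ℂ) * ((n * treeProb μ n : ℝ) : ℂ)) - (A : ℂ)
        = ((Real.sqrt n * (2 * Real.pi * (n * treeProb μ n)) - A : ℝ) : ℂ) := by
      push_cast; ring
    rw [dist_eq_norm, e, Complex.norm_real, Real.norm_eq_abs] at hnN
    exact hnN
  have hA2 : A = Real.sqrt (2 * Real.pi) * d / Real.sqrt σ2 := by
    have : Real.pi / (σ2 / (2 * d^2)) = (2 * Real.pi) * d^2 / σ2 := by field_simp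
    rw [hA, this, Real.sqrt_div (by positivity), Real.sqrt_mul (by positivity),
      Real.sqrt_sq hd'.le]
  have hpow : (n:ℝ) ^ (-(3:ℝ)/2) = (n * Real.sqrt n)⁻¹ := by
    have : (-(3:ℝ)/2) = -(1 + 1/2) := by norm_num
    rw [this, Real.rpow_neg hn0.le, Real.rpow_add hn0, Real.rpow_one, Real.sqrt_eq_rpow]
  have hs : 0 < Real.sqrt n := Real.sqrt_pos.2 hn0
  have hσ : 0 < Real.sqrt σ2 := Real.sqrt_pos.2 hσpos
  have hsp : 0 < Real.sqrt (2 * Real.pi) := Real.sqrt_pos.2 (by positivity)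
  have hsp2 : Real.sqrt (2 * Real.pi) ^ 2 = 2 * Real.pi := Real.sq_sqrt (by positivity)
  have heq : treeProb μ n /
          ((d : ℝ) * (n : ℝ) ^ (-(3:ℝ)/2) / (Real.sqrt σ2 * Real.sqrt (2 * Real.pi))) - 1
      = (Real.sqrt n * (2 * Real.pi * (n * treeProb μ n)) - A) / A := by
    have e : Real.sqrt n * (2 * Real.pi * (n * treeProb μ n))
        = Real.sqrt n * (Real.sqrt (2 * Real.pi) ^ 2 * (n * treeProb μ n)) := by rw [hsp2]
    rw [hpow, hA2, e]
    generalize Real.sqrt (2 * Real.pi) = w at hsp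
    field_simp
  rw [heq, abs_div, abs_of_pos hApos, div_lt_iff₀ hApos]
  exact hnN'
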